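/- Let d̄ : ℕ × ℕ → ℤ satisfy the master degree equation d̄_{l+1,m+1} = d̄_{l+1,m} + d̄_{l,m+1} + d̄_{l-1,m-1} - d̄_{l,m-1} - d̄_{l-1,m} for all l,m ≥ 1, together with the Case I boundary values d̄_{0,0} = 1, d̄_{l,0} = d̄_{0,m} = 0 for all l,m ≥ 1, and d̄_{1,m} = d̄_{l,1} = 1 for all l,m ≥ 1. Then d̄_{l+1,m+1} = d̄_{l,m} + 2 for all l,m ≥ 1, and in particular d̄_{l,l} = 2l - 1 for all l ≥ 1, i.e. the reduced degree grows linearly along the diagonal. -/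

import Mathlib

/-!
Regrouped along diagonals, the master degree equation says that the diagonal difference
`e (l, m) = d (l + 1, m + 1) - d (l, m)` has zero mixed difference, i.e. solves the discrete wave
equation. By d'Alembert's formula, `e (l, m) = e (l, 0) + e (0, m) - e (0, 0)`. The Case I boundary
values give `e (l, 0) = e (0, m) = 1` off the corner and `e (0, 0) = 0`, hence `e = 1 + 1 - 0 = 2`.
-/

section

variable {G : Type*} [AddCommGroup G]

/-- The discrete wave equation in light-cone coordinates on the quadrant `ℕ × ℕ`, satisfied by the
diagonal differences of a reduced degree. -/
def DiscreteWaveEquation (e : ℕ × ℕ → G) : Prop :=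
  ∀ l m : ℕ, e (l + 1, m + 1) = e (l + 1, m) + e (l, m + 1) - e (l, m)

/-- The master degree equation for a function on the quadrant `ℕ × ℕ`. Both indices are shifted up
by one from the usual form, valid for `l, m ≥ 1`, so that no index subtraction occurs. -/
def MasterDegreeEquation (d : ℕ × ℕ → G) : Prop :=
  ∀ l m : ℕ, d (l + 2, m + 2) =
    d (l + 2, m + 1) + d (l + 1, m + 2) + d (l, m) - d (l + 1, m) - d (l, m + 1)

/-- The increment of `d` along one diagonal step, the quantity in which the master degree equation
becomes a wave equation. -/
def diagDiff (d : ℕ × ℕ → G) (p : ℕ × ℕ) : G :=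
  d (p.1 + 1, p.2 + 1) - d p

theorem DiscreteWaveEquation.eq_add_sub {e : ℕ × ℕ → G} (he : DiscreteWaveEquation e) :
    ∀ l m : ℕ, e (l, m) = e (l, 0) + e (0, m) - e (0, 0)
  | _, 0 => (add_sub_cancel_right _ _).symm
  | 0, _ + 1 => (add_sub_cancel_left _ _).symm
  | l + 1, m + 1 => by
    rw [he l m, he.eq_add_sub (l + 1) m, he.eq_add_sub l (m + 1), he.eq_add_sub l m]
    abel

theorem MasterDegreeEquation.discreteWaveEquation_diagDiff {d : ℕ × ℕ → G}
    (hd : MasterDegreeEquation d) : DiscreteWaveEquation (diagDiff d) := by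
  intro l m
  simp only [diagDiff, add_assoc, Nat.reduceAdd, hd l m]
  abel

theorem eq_zsmul_of_add_two_nsmul {u : ℕ → G} {a : G} (h1 : u 1 = a)
    (hu : ∀ n, 1 ≤ n → u (n + 1) = u n + 2 • a) {n : ℕ} (hn : 1 ≤ n) :
    u n = (2 * n - 1 : ℤ) • a := by
  induction n, hn using Nat.le_induction with
  | base => simp [h1]
  | succ n hn ih =>
    rw [hu n hn, ih]
    push_cast
    module

theorem stmt8_general (d : ℕ × ℕ → G) (a : G) (hd : MasterDegreeEquation d)
    (h00 : d (0, 0) = a)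
    (hl0 : ∀ l : ℕ, 1 ≤ l → d (l, 0) = 0)
    (h0m : ∀ m : ℕ, 1 ≤ m → d (0, m) = 0)
    (h1m : ∀ m : ℕ, 1 ≤ m → d (1, m) = a)
    (hl1 : ∀ l : ℕ, 1 ≤ l → d (l, 1) = a) :
    (∀ l m : ℕ, 1 ≤ l → 1 ≤ m → d (l + 1, m + 1) = d (l, m) + 2 • a) ∧
      (∀ l : ℕ, 1 ≤ l → d (l, l) = (2 * l - 1 : ℤ) • a) := by
  have corner : diagDiff d (0, 0) = 0 := by simp [diagDiff, h1m, h00]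
  have horizontal (l : ℕ) (hl : 1 ≤ l) : diagDiff d (l, 0) = a := by simp [diagDiff, hl1, hl0 l hl]
  have vertical (m : ℕ) (hm : 1 ≤ m) : diagDiff d (0, m) = a := by simp [diagDiff, h1m, h0m m hm]
  have step (l m : ℕ) (hl : 1 ≤ l) (hm : 1 ≤ m) : d (l + 1, m + 1) = d (l, m) + 2 • a := by
    have interior : diagDiff d (l, m) = 2 • a := by
      rw [hd.discreteWaveEquation_diagDiff.eq_add_sub, horizontal l hl, vertical m hm, corner,
        sub_zero, two_nsmul]
    exact eq_add_of_sub_eq' interior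
  exact ⟨step, fun l hl ↦
    eq_zsmul_of_add_two_nsmul (u := fun n ↦ d (n, n)) (h1m 1 le_rfl) (fun n hn ↦ step n n hn hn) hl⟩

end

/-- If `d̄` satisfies the master degree equation (for `l,m ≥ 1`, stated
with shifted indices) with Case I boundary values `d̄_{0,0} = 1`,
`d̄_{l,0} = d̄_{0,m} = 0` for `l,m ≥ 1`, and `d̄_{1,m} = d̄_{l,1} = 1` for `l,m ≥ 1`,
then `d̄_{l+1,m+1} = d̄_{l,m} + 2` for all `l,m ≥ 1`, and in particular
`d̄_{l,l} = 2l - 1` for all `l ≥ 1`: linear growth along the diagonal. -/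
theorem stmt8 (db : ℕ × ℕ → ℤ)
    (hrec : ∀ l m : ℕ, db (l + 2, m + 2) =
      db (l + 2, m + 1) + db (l + 1, m + 2) + db (l, m) - db (l + 1, m) - db (l, m + 1))
    (h00 : db (0, 0) = 1)
    (hl0 : ∀ l : ℕ, 1 ≤ l → db (l, 0) = 0)
    (h0m : ∀ m : ℕ, 1 ≤ m → db (0, m) = 0)
    (h1m : ∀ m : ℕ, 1 ≤ m → db (1, m) = 1)
    (hl1 : ∀ l : ℕ, 1 ≤ l → db (l, 1) = 1) :
    (∀ l m : ℕ, 1 ≤ l → 1 ≤ m → db (l + 1, m + 1) = db (l, m) + 2) ∧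
      (∀ l : ℕ, 1 ≤ l → db (l, l) = 2 * l - 1) := by
  simpa using stmt8_general db 1 hrec h00 hl0 h0m h1m hl1
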